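/- arXiv:1605.02485 — 3 statements merged into one kernel-verified Lean document; each statement's English description precedes it below -/
import Mathlib

section
/- Let T : ℍⁿ ⇉ V₁ be a maximal H-monotone set-valued map with dom(T) = ℍⁿ. Then T is locally bounded: for every η₀ ∈ ℍⁿ there exist r > 0 and M > 0 such that ‖v‖ ≤ M for every η ∈ ℍⁿ with d_H(η, η₀) ≤ r and every v ∈ T(η). -/
open scoped RealInnerProductSpace Pointwise

noncomputable section

abbrev E (n : ℕ) := EuclideanSpace ℝ (Fin n)
abbrev Heis (n : ℕ) := E n × E n × ℝ
abbrev V1 (n : ℕ) := WithLp 2 (E n × E n)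

/-- The projection ξ₁(x,y,t) = (x,y) onto the first layer V₁ ≅ ℝ²ⁿ. -/
def xi1 {n : ℕ} (η : Heis n) : V1 n := (WithLp.equiv 2 (E n × E n)).symm (η.1, η.2.1)

/-- The horizontal plane through η₀. -/
def Hplane {n : ℕ} (η₀ : Heis n) : Set (Heis n) :=
  {η | η.2.2 = η₀.2.2 + 2 * (⟪η₀.2.1, η.1⟫ - ⟪η₀.1, η.2.1⟫)}

/-- H-monotonicity of a set-valued map T : ℍⁿ ⇉ V₁. -/
def IsHMonotone {n : ℕ} (T : Heis n → Set (V1 n)) : Prop :=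
  ∀ η η', η' ∈ Hplane η → ∀ v ∈ T η, ∀ v' ∈ T η', 0 ≤ ⟪v - v', xi1 η - xi1 η'⟫

/-- Maximal H-monotonicity. -/
def IsMaximalHMonotone {n : ℕ} (T : Heis n → Set (V1 n)) : Prop :=
  IsHMonotone T ∧
    ∀ η v, (∀ η' ∈ Hplane η, ∀ v' ∈ T η', 0 ≤ ⟪v - v', xi1 η - xi1 η'⟫) → v ∈ T η

/-- Heisenberg group law. -/
def hmul {n : ℕ} (η η' : Heis n) : Heis n :=
  (η.1 + η'.1, η.2.1 + η'.2.1,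
    η.2.2 + η'.2.2 + 2 * (⟪η'.1, η.2.1⟫ - ⟪η.1, η'.2.1⟫))

/-- Heisenberg group inverse. -/
def hinv {n : ℕ} (η : Heis n) : Heis n := (-η.1, -η.2.1, -η.2.2)

/-- The Korányi gauge N(x,y,t) = ((‖x‖²+‖y‖²)² + t²)^(1/4). -/
def gaugeN {n : ℕ} (η : Heis n) : ℝ :=
  ((‖η.1‖ ^ 2 + ‖η.2.1‖ ^ 2) ^ 2 + η.2.2 ^ 2) ^ ((1 : ℝ) / 4)

/-- The Korányi–Cygan distance d_H(η,η') = N(η'⁻¹ ∘ η). -/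
def dH {n : ℕ} (η η' : Heis n) : ℝ := gaugeN (hmul (hinv η') η)

/-!
Call `q` horizontal to `p` if `q` lies in the horizontal plane of `p`. The height by which `q`
misses that plane, the defect, is antisymmetric in `(p, q)` and affine in `q`. Hence the barycentre
of three points, each weighted by the defect of the opposite edge, is horizontal to all three. If
the weights `m i` are positive and `v i` is a value of a horizontally monotone map at the vertex
`p i`, comparison with any value at the barycentre `Q` gives `∑ i, m i * ⟪v i, Q - p i⟫ ≤ 0`, in
which that value no longer occurs. Keeping two vertices fixed and letting the third one vary near
`p₀`, this bounds the values there from above in the direction `Q - p₀`. Since the symplectic form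
is nondegenerate, arbitrarily small triangles at `p₀` realize every direction, and in finite
dimension such one-sided bounds, with a small relative error, bound the norm.
-/

open Filter Topology

section BoundedValues

variable {V : Type*} [NormedAddCommGroup V] [InnerProductSpace ℝ V]

lemma norm_le_two_mul_of_inner_le {v w : V} {C : ℝ} (hw : ‖‖v‖⁻¹ • v - w‖ ≤ 1 / 4)
    (hvw : ⟪v, w⟫ ≤ C + 1 / 4 * ‖v‖) : ‖v‖ ≤ 2 * C := by
  have hself : ⟪v, ‖v‖⁻¹ • v⟫ = ‖v‖ := by
    rw [real_inner_smul_right, real_inner_self_eq_norm_sq]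
    field_simp
  have hdiff : ⟪v, ‖v‖⁻¹ • v - w⟫ ≤ ‖v‖ * (1 / 4) :=
    (real_inner_le_norm _ _).trans (by gcongr)
  rw [inner_sub_right, hself] at hdiff
  linarith

lemma exists_eventually_norm_le_of_forall_inner_le [FiniteDimensional ℝ V] {α : Type*}
    {l : Filter α} {F : α → Set V}
    (hF : ∀ w, ‖w‖ = 1 → ∃ C : ℝ, ∀ᶠ p in l, ∀ v ∈ F p, ⟪v, w⟫ ≤ C + 1 / 4 * ‖v‖) :
    ∃ C : ℝ, ∀ᶠ p in l, ∀ v ∈ F p, ‖v‖ ≤ C := by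
  obtain ⟨net, hnet, hfin, hcover⟩ :=
    (isCompact_sphere (0 : V) 1).finite_cover_balls (e := 1 / 4) (by norm_num)
  choose! C hC using fun w (hw : w ∈ net) ↦ hF w (by simpa using hnet hw)
  obtain ⟨B, hB⟩ := (hfin.image C).bddAbove
  refine ⟨2 * max B 0, ?_⟩
  filter_upwards [(eventually_all_finite hfin).mpr hC] with p hp v hv
  rcases eq_or_ne v 0 with rfl | hv₀
  · simp
  have hunit : ‖v‖⁻¹ • v ∈ Metric.sphere (0 : V) 1 := by
    simp [norm_smul, norm_ne_zero_iff.mpr hv₀]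
  obtain ⟨w, hw, hvw⟩ := Set.mem_iUnion₂.mp (hcover hunit)
  refine norm_le_two_mul_of_inner_le (mem_ball_iff_norm.mp hvw).le ((hp w hw v hv).trans ?_)
  gcongr
  exact (hB (Set.mem_image_of_mem C hw)).trans (le_max_left B 0)

end BoundedValues

section Defect

variable {V : Type*} [AddCommGroup V] [Module ℝ V] {ω : LinearMap.BilinForm ℝ V}

/-- The height by which `q` lies below the horizontal plane through `p`, in the Heisenberg group
`V × ℝ` with law `(z, t) ∘ (z', t') = (z + z', t + t' + ω z z')`. -/
def horizontalDefect (ω : LinearMap.BilinForm ℝ V) (p q : V × ℝ) : ℝ :=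
  p.2 - q.2 + ω p.1 q.1

/-- The barycentre of three points, each weighted by the defect of the opposite edge. The division
gives `0` when the three defects add up to `0`. -/
def horizontalHub (ω : LinearMap.BilinForm ℝ V) (p₀ p₁ p₂ : V × ℝ) : V × ℝ :=
  (horizontalDefect ω p₁ p₂ + horizontalDefect ω p₂ p₀ + horizontalDefect ω p₀ p₁)⁻¹ •
    (horizontalDefect ω p₁ p₂ • p₀ + horizontalDefect ω p₂ p₀ • p₁ +
      horizontalDefect ω p₀ p₁ • p₂)

lemma horizontalHub_rotate (p₀ p₁ p₂ : V × ℝ) :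
    horizontalHub ω p₁ p₂ p₀ = horizontalHub ω p₀ p₁ p₂ := by
  unfold horizontalHub
  congr 1
  · ring
  · abel

lemma horizontalDefect_comm (hω : ω.IsAlt) (p q : V × ℝ) :
    horizontalDefect ω q p = -horizontalDefect ω p q := by
  rw [horizontalDefect, horizontalDefect, ← hω.neg_eq p.1 q.1]
  ring

lemma horizontalDefect_hub_left (hω : ω.IsAlt) {p₀ p₁ p₂ : V × ℝ}
    (hsum : horizontalDefect ω p₁ p₂ + horizontalDefect ω p₂ p₀ + horizontalDefect ω p₀ p₁ ≠ 0) :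
    horizontalDefect ω p₀ (horizontalHub ω p₀ p₁ p₂) = 0 := by
  have haffine (a b c : ℝ) (h : a + b + c ≠ 0) :
      horizontalDefect ω p₀ ((a + b + c)⁻¹ • (a • p₀ + b • p₁ + c • p₂)) =
        (a + b + c)⁻¹ * (b * horizontalDefect ω p₀ p₁ + c * horizontalDefect ω p₀ p₂) := by
    simp only [horizontalDefect, Prod.smul_fst, Prod.smul_snd, Prod.fst_add, Prod.snd_add,
      smul_eq_mul, map_smul, map_add, hω.self_eq_zero]
    field_simp
    ring
  rw [horizontalHub, haffine _ _ _ hsum, horizontalDefect_comm hω p₂ p₀]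
  ring

lemma sum_defect_smul_hub_sub_eq_zero {p₀ p₁ p₂ : V × ℝ}
    (hsum : horizontalDefect ω p₁ p₂ + horizontalDefect ω p₂ p₀ + horizontalDefect ω p₀ p₁ ≠ 0) :
    horizontalDefect ω p₁ p₂ • (horizontalHub ω p₀ p₁ p₂ - p₀) +
      horizontalDefect ω p₂ p₀ • (horizontalHub ω p₀ p₁ p₂ - p₁) +
      horizontalDefect ω p₀ p₁ • (horizontalHub ω p₀ p₁ p₂ - p₂) = 0 := by
  have hhub := smul_inv_smul₀ hsum (horizontalDefect ω p₁ p₂ • p₀ +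
    horizontalDefect ω p₂ p₀ • p₁ + horizontalDefect ω p₀ p₁ • p₂)
  rw [← horizontalHub, ← sub_eq_zero] at hhub
  rw [← hhub]
  module

/-- A triangle whose three defects, taken cyclically, are positive, so that its hub is a convex
combination of its vertices. -/
structure IsPositiveTriangle (ω : LinearMap.BilinForm ℝ V) (p₀ p₁ p₂ : V × ℝ) : Prop where
  defect₀₁_pos : 0 < horizontalDefect ω p₀ p₁
  defect₁₂_pos : 0 < horizontalDefect ω p₁ p₂
  defect₂₀_pos : 0 < horizontalDefect ω p₂ p₀

namespace IsPositiveTriangle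

variable {p₀ p₁ p₂ : V × ℝ}

lemma rotate (h : IsPositiveTriangle ω p₀ p₁ p₂) : IsPositiveTriangle ω p₁ p₂ p₀ :=
  ⟨h.defect₁₂_pos, h.defect₂₀_pos, h.defect₀₁_pos⟩

lemma sum_defect_ne_zero (h : IsPositiveTriangle ω p₀ p₁ p₂) :
    horizontalDefect ω p₁ p₂ + horizontalDefect ω p₂ p₀ + horizontalDefect ω p₀ p₁ ≠ 0 :=
  (add_pos (add_pos h.defect₁₂_pos h.defect₂₀_pos) h.defect₀₁_pos).ne'

end IsPositiveTriangle

/-- The left translate by `p` of the point `(2 • w + a, ω w a)`. Together with `p`, the points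
`horizontalFork ω p w (-a)` and `horizontalFork ω p w a` form a triangle whose hub lies over
`p.1 + w`. -/
def horizontalFork (ω : LinearMap.BilinForm ℝ V) (p : V × ℝ) (w a : V) : V × ℝ :=
  (p.1 + ((2 : ℝ) • w + a), p.2 + ω w a + ω p.1 ((2 : ℝ) • w + a))

lemma horizontalDefect_fork (hω : ω.IsAlt) (p : V × ℝ) (w a : V) :
    horizontalDefect ω p (horizontalFork ω p w a) = -ω w a := by
  simp only [horizontalDefect, horizontalFork, map_add, hω.self_eq_zero]
  ring

lemma horizontalDefect_fork_neg_fork (hω : ω.IsAlt) (p : V × ℝ) (w a : V) :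
    horizontalDefect ω (horizontalFork ω p w (-a)) (horizontalFork ω p w a) = 2 * ω w a := by
  simp only [horizontalDefect, horizontalFork, map_add, map_neg, map_smul, LinearMap.add_apply,
    LinearMap.neg_apply, LinearMap.smul_apply, smul_eq_mul, hω.self_eq_zero,
    ← hω.neg_eq p.1 w, ← hω.neg_eq p.1 a, ← hω.neg_eq w a]
  ring

lemma isPositiveTriangle_fork (hω : ω.IsAlt) (p : V × ℝ) {w a : V} (hwa : 0 < ω w a) :
    IsPositiveTriangle ω p (horizontalFork ω p w (-a)) (horizontalFork ω p w a) where
  defect₀₁_pos := by simpa [horizontalDefect_fork hω] using hwa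
  defect₁₂_pos := by simpa [horizontalDefect_fork_neg_fork hω] using hwa
  defect₂₀_pos := by simpa [horizontalDefect_comm hω p, horizontalDefect_fork hω] using hwa

lemma horizontalHub_fork (hω : ω.IsAlt) (p : V × ℝ) {w a : V} (hwa : ω w a ≠ 0) :
    horizontalHub ω p (horizontalFork ω p w (-a)) (horizontalFork ω p w a) =
      (p.1 + w, p.2 + ω p.1 w) := by
  have hsum : 2 * ω w a + ω w a + ω w a ≠ 0 := by
    rw [show 2 * ω w a + ω w a + ω w a = 4 * ω w a by ring]
    positivity
  simp only [horizontalHub, horizontalDefect_fork_neg_fork hω,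
    horizontalDefect_comm hω p (horizontalFork ω p w a), horizontalDefect_fork hω, map_neg, neg_neg]
  rw [inv_smul_eq_iff₀ hsum]
  ext1
  · simp only [horizontalFork, Prod.fst_add, Prod.smul_fst]
    module
  · simp only [horizontalFork, Prod.snd_add, Prod.smul_snd, smul_eq_mul, map_add, map_neg, map_smul]
    ring

lemma exists_apply_pos_of_separatingLeft (hsep : ω.SeparatingLeft) {w : V} (hw : w ≠ 0) :
    ∃ a, 0 < ω w a := by
  obtain ⟨b, hb⟩ := not_forall.mp fun h ↦ hw (hsep w h)
  rcases lt_or_gt_of_ne hb with hneg | hpos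
  · exact ⟨-b, by simpa using hneg⟩
  · exact ⟨b, hpos⟩

lemma exists_isPositiveTriangle_mem_nhds [TopologicalSpace V] [ContinuousAdd V] [ContinuousSMul ℝ V]
    (hω : ω.IsAlt) (hsep : ω.SeparatingLeft) {p₀ : V × ℝ} {U : Set (V × ℝ)} (hU : U ∈ 𝓝 p₀)
    {w : V} (hw : w ≠ 0) :
    ∃ s > (0 : ℝ), ∃ p₁ ∈ U, ∃ p₂ ∈ U, IsPositiveTriangle ω p₀ p₁ p₂ ∧
      U ∈ 𝓝 (horizontalHub ω p₀ p₁ p₂) ∧ (horizontalHub ω p₀ p₁ p₂).1 - p₀.1 = s • w := by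
  obtain ⟨a, ha⟩ := exists_apply_pos_of_separatingLeft hsep hw
  have hfork (b : V) : ∀ᶠ s in 𝓝 (0 : ℝ), horizontalFork ω p₀ (s • w) (s • b) ∈ U := by
    have hcont : Continuous fun s : ℝ ↦ horizontalFork ω p₀ (s • w) (s • b) := by
      simp only [horizontalFork, map_add, map_smul, LinearMap.smul_apply, smul_eq_mul]
      fun_prop
    exact hcont.continuousAt.eventually_mem (by simpa [horizontalFork] using hU)
  have hhub : ∀ᶠ s in 𝓝 (0 : ℝ), U ∈ 𝓝 (p₀.1 + s • w, p₀.2 + ω p₀.1 (s • w)) := by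
    have hcont : Continuous fun s : ℝ ↦ (p₀.1 + s • w, p₀.2 + ω p₀.1 (s • w)) := by
      simp only [map_smul, smul_eq_mul]
      fun_prop
    refine hcont.continuousAt.eventually (p := fun q ↦ U ∈ 𝓝 q) ?_
    simpa using hU
  obtain ⟨s, hs, hminus, hplus, hmem⟩ := ((hfork (-a)).and ((hfork a).and hhub)).exists_gt
  have hsa : 0 < ω (s • w) (s • a) := by
    simpa using mul_pos hs (mul_pos hs ha)
  rw [smul_neg] at hminus
  refine ⟨s, hs, _, hminus, _, hplus, isPositiveTriangle_fork hω p₀ hsa, ?_, ?_⟩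
  · rwa [horizontalHub_fork hω p₀ hsa.ne']
  · rw [horizontalHub_fork hω p₀ hsa.ne', add_sub_cancel_left]

end Defect

section DefectContinuity

variable {V : Type*} [AddCommGroup V] [Module ℝ V] [TopologicalSpace V] [IsTopologicalAddGroup V]
  [ContinuousSMul ℝ V] [T2Space V] [FiniteDimensional ℝ V] {ω : LinearMap.BilinForm ℝ V}

lemma continuous_horizontalDefect_left (q : V × ℝ) :
    Continuous fun p ↦ horizontalDefect ω p q := by
  have : Continuous (ω.flip q.1) := LinearMap.continuous_of_finiteDimensional _
  exact (continuous_snd.sub continuous_const).add (this.comp continuous_fst)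

lemma continuous_horizontalDefect_right (p : V × ℝ) :
    Continuous fun q ↦ horizontalDefect ω p q := by
  have : Continuous (ω p.1) := LinearMap.continuous_of_finiteDimensional _
  exact (continuous_const.sub continuous_snd).add (this.comp continuous_fst)

lemma continuousAt_horizontalHub {p₀ p₁ p₂ : V × ℝ}
    (hsum : horizontalDefect ω p₁ p₂ + horizontalDefect ω p₂ p₀ + horizontalDefect ω p₀ p₁ ≠ 0) :
    ContinuousAt (fun p ↦ horizontalHub ω p p₁ p₂) p₀ := by
  have h₂ := continuous_horizontalDefect_right (ω := ω) p₂
  have h₁ := continuous_horizontalDefect_left (ω := ω) p₁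
  unfold horizontalHub
  exact (((continuousAt_const.add h₂.continuousAt).add h₁.continuousAt).inv₀ hsum).smul
    (by fun_prop)

lemma IsPositiveTriangle.eventually_nhds {p₀ p₁ p₂ : V × ℝ} (h : IsPositiveTriangle ω p₀ p₁ p₂) :
    ∀ᶠ p in 𝓝 p₀, IsPositiveTriangle ω p p₁ p₂ := by
  filter_upwards [
    (continuous_horizontalDefect_left p₁).continuousAt.eventually_const_lt h.defect₀₁_pos,
    (continuous_horizontalDefect_right p₂).continuousAt.eventually_const_lt h.defect₂₀_pos]
    with p hp₁ hp₂
  exact ⟨hp₁, h.defect₁₂_pos, hp₂⟩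

end DefectContinuity

/-- H-monotonicity of a set-valued map on the Heisenberg group `V × ℝ` of `ω`. -/
def IsHorizontallyMonotone {V : Type*} [NormedAddCommGroup V] [InnerProductSpace ℝ V]
    (ω : LinearMap.BilinForm ℝ V) (F : V × ℝ → Set V) : Prop :=
  ∀ p q, horizontalDefect ω p q = 0 → ∀ v ∈ F p, ∀ v' ∈ F q, 0 ≤ ⟪v - v', p.1 - q.1⟫

namespace IsHorizontallyMonotone

variable {V : Type*} [NormedAddCommGroup V] [InnerProductSpace ℝ V] {ω : LinearMap.BilinForm ℝ V}
  {F : V × ℝ → Set V} {p₀ p₁ p₂ : V × ℝ}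

lemma sum_defect_mul_inner_le_zero (hF : IsHorizontallyMonotone ω F) (hω : ω.IsAlt)
    (htri : IsPositiveTriangle ω p₀ p₁ p₂) (hne : (F (horizontalHub ω p₀ p₁ p₂)).Nonempty)
    {v₀ v₁ v₂ : V} (hv₀ : v₀ ∈ F p₀) (hv₁ : v₁ ∈ F p₁) (hv₂ : v₂ ∈ F p₂) :
    horizontalDefect ω p₁ p₂ * ⟪v₀, (horizontalHub ω p₀ p₁ p₂).1 - p₀.1⟫ +
      horizontalDefect ω p₂ p₀ * ⟪v₁, (horizontalHub ω p₀ p₁ p₂).1 - p₁.1⟫ +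
      horizontalDefect ω p₀ p₁ * ⟪v₂, (horizontalHub ω p₀ p₁ p₂).1 - p₂.1⟫ ≤ 0 := by
  obtain ⟨q, hq⟩ := hne
  have hbary := congrArg Prod.fst (sum_defect_smul_hub_sub_eq_zero htri.sum_defect_ne_zero)
  have hp₀ := horizontalDefect_hub_left hω htri.sum_defect_ne_zero
  have hp₁ := horizontalDefect_hub_left hω htri.rotate.sum_defect_ne_zero
  have hp₂ := horizontalDefect_hub_left hω htri.rotate.rotate.sum_defect_ne_zero
  rw [horizontalHub_rotate] at hp₁
  rw [← horizontalHub_rotate] at hp₂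
  generalize horizontalHub ω p₀ p₁ p₂ = Q at *
  have hle {p : V × ℝ} {v : V} (hpQ : horizontalDefect ω p Q = 0) (hv : v ∈ F p) :
      ⟪v, Q.1 - p.1⟫ ≤ ⟪q, Q.1 - p.1⟫ := by
    have h := hF p Q hpQ v hv q hq
    rw [← neg_sub Q.1, inner_neg_right, inner_sub_left] at h
    linarith
  calc
    _ ≤ horizontalDefect ω p₁ p₂ * ⟪q, Q.1 - p₀.1⟫ + horizontalDefect ω p₂ p₀ * ⟪q, Q.1 - p₁.1⟫ +
        horizontalDefect ω p₀ p₁ * ⟪q, Q.1 - p₂.1⟫ :=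
      add_le_add (add_le_add
        (mul_le_mul_of_nonneg_left (hle hp₀ hv₀) htri.defect₁₂_pos.le)
        (mul_le_mul_of_nonneg_left (hle hp₁ hv₁) htri.defect₂₀_pos.le))
        (mul_le_mul_of_nonneg_left (hle hp₂ hv₂) htri.defect₀₁_pos.le)
    _ = ⟪q, horizontalDefect ω p₁ p₂ • (Q.1 - p₀.1) + horizontalDefect ω p₂ p₀ • (Q.1 - p₁.1) +
        horizontalDefect ω p₀ p₁ • (Q.1 - p₂.1)⟫ := by
      simp only [real_inner_smul_right, inner_add_right]
    _ = 0 := by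
      rw [← inner_zero_right q]
      exact congrArg (inner ℝ q) hbary

variable [FiniteDimensional ℝ V]

lemma exists_eventually_inner_le_of_isPositiveTriangle (hF : IsHorizontallyMonotone ω F)
    (hω : ω.IsAlt) (htri : IsPositiveTriangle ω p₀ p₁ p₂)
    (hne₁ : (F p₁).Nonempty) (hne₂ : (F p₂).Nonempty)
    (hne : ∀ᶠ q in 𝓝 (horizontalHub ω p₀ p₁ p₂), (F q).Nonempty) {ε : ℝ} (hε : 0 < ε) :
    ∃ C : ℝ, ∀ᶠ p in 𝓝 p₀, ∀ v ∈ F p,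
      ⟪v, (horizontalHub ω p₀ p₁ p₂).1 - p₀.1⟫ ≤ C + ε * ‖v‖ := by
  obtain ⟨v₁, hv₁⟩ := hne₁
  obtain ⟨v₂, hv₂⟩ := hne₂
  let Q : V × ℝ → V × ℝ := fun p ↦ horizontalHub ω p p₁ p₂
  let R : V × ℝ → ℝ := fun p ↦ -(horizontalDefect ω p₂ p * ⟪v₁, (Q p).1 - p₁.1⟫ +
    horizontalDefect ω p p₁ * ⟪v₂, (Q p).1 - p₂.1⟫) / horizontalDefect ω p₁ p₂
  have hQ : ContinuousAt Q p₀ := continuousAt_horizontalHub htri.sum_defect_ne_zero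
  have hR : ContinuousAt R p₀ := by
    have := continuous_horizontalDefect_right (ω := ω) p₂
    have := continuous_horizontalDefect_left (ω := ω) p₁
    fun_prop
  have hdir : ∀ᶠ p in 𝓝 p₀, ‖((Q p₀).1 - p₀.1) - ((Q p).1 - p.1)‖ < ε :=
    ContinuousAt.eventually_lt (by fun_prop) continuousAt_const (by simpa using hε)
  refine ⟨R p₀ + 1, ?_⟩
  filter_upwards [hR.eventually_lt_const (lt_add_one _), hdir, htri.eventually_nhds,
    hQ.eventually hne] with p hRp hdirp htrip hnep v hv
  have hmain : ⟪v, (Q p).1 - p.1⟫ ≤ R p := by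
    rw [le_div_iff₀ htri.defect₁₂_pos]
    linarith [hF.sum_defect_mul_inner_le_zero hω htrip hnep hv hv₁ hv₂]
  calc ⟪v, (Q p₀).1 - p₀.1⟫
      = ⟪v, (Q p).1 - p.1⟫ + ⟪v, ((Q p₀).1 - p₀.1) - ((Q p).1 - p.1)⟫ := by
        rw [← inner_add_right, add_sub_cancel]
    _ ≤ R p + ‖v‖ * ‖((Q p₀).1 - p₀.1) - ((Q p).1 - p.1)‖ :=
        add_le_add hmain (real_inner_le_norm _ _)
    _ ≤ R p₀ + 1 + ε * ‖v‖ := by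
        rw [mul_comm ε]
        gcongr

lemma exists_eventually_inner_le (hF : IsHorizontallyMonotone ω F) (hω : ω.IsAlt)
    (hsep : ω.SeparatingLeft) (hdom : ∀ᶠ p in 𝓝 p₀, (F p).Nonempty) {w : V} (hw : w ≠ 0)
    {ε : ℝ} (hε : 0 < ε) :
    ∃ C : ℝ, ∀ᶠ p in 𝓝 p₀, ∀ v ∈ F p, ⟪v, w⟫ ≤ C + ε * ‖v‖ := by
  obtain ⟨s, hs, p₁, hp₁, p₂, hp₂, htri, hhub, hdir⟩ :=
    exists_isPositiveTriangle_mem_nhds hω hsep hdom hw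
  obtain ⟨C, hC⟩ :=
    hF.exists_eventually_inner_le_of_isPositiveTriangle hω htri hp₁ hp₂ hhub (mul_pos hs hε)
  refine ⟨C / s, ?_⟩
  filter_upwards [hC] with p hp v hv
  have hsv := hp v hv
  rw [hdir, real_inner_smul_right] at hsv
  refine le_of_mul_le_mul_left (hsv.trans_eq ?_) hs
  field_simp

theorem exists_eventually_norm_le (hF : IsHorizontallyMonotone ω F) (hω : ω.IsAlt)
    (hsep : ω.SeparatingLeft) (hdom : ∀ᶠ p in 𝓝 p₀, (F p).Nonempty) :
    ∃ C : ℝ, ∀ᶠ p in 𝓝 p₀, ∀ v ∈ F p, ‖v‖ ≤ C :=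
  exists_eventually_norm_le_of_forall_inner_le fun _ hw ↦
    hF.exists_eventually_inner_le hω hsep hdom (norm_ne_zero_iff.mp (by simp [hw])) (by norm_num)

end IsHorizontallyMonotone

section Heis

variable {n : ℕ}

/-- The symplectic form on `V1 n` that appears in the group law of `Heis n`. -/
def heisForm (n : ℕ) : LinearMap.BilinForm ℝ (V1 n) :=
  LinearMap.mk₂ ℝ (fun a b ↦ 2 * (⟪a.snd, b.fst⟫ - ⟪a.fst, b.snd⟫))
    (fun _ _ _ ↦ by simp only [WithLp.add_fst, WithLp.add_snd, inner_add_left]; ring)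
    (fun _ _ _ ↦ by
      simp only [WithLp.smul_fst, WithLp.smul_snd, real_inner_smul_left, smul_eq_mul]; ring)
    (fun _ _ _ ↦ by simp only [WithLp.add_fst, WithLp.add_snd, inner_add_right]; ring)
    (fun _ _ _ ↦ by
      simp only [WithLp.smul_fst, WithLp.smul_snd, real_inner_smul_right, smul_eq_mul]; ring)

lemma heisForm_apply (a b : V1 n) :
    heisForm n a b = 2 * (⟪a.snd, b.fst⟫ - ⟪a.fst, b.snd⟫) := rfl

lemma isAlt_heisForm : (heisForm n).IsAlt := fun a ↦ by
  rw [heisForm_apply, real_inner_comm, sub_self, mul_zero]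

lemma separatingLeft_heisForm : (heisForm n).SeparatingLeft := fun a ha ↦ by
  have h : 2 * (⟪a.snd, a.snd⟫ - ⟪a.fst, -a.fst⟫) = 0 := ha (WithLp.toLp 2 (a.snd, -a.fst))
  rw [inner_neg_right, real_inner_self_eq_norm_sq, real_inner_self_eq_norm_sq] at h
  have hnorm : ‖a‖ ^ 2 = 0 := by
    rw [WithLp.prod_norm_sq_eq_of_L2]
    linarith
  exact norm_eq_zero.mp (pow_eq_zero_iff two_ne_zero |>.mp hnorm)

/-- The coordinates `(x, y, t) ↦ ((x, y), t)` that identify `Heis n` with the Heisenberg group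
`V1 n × ℝ` of `heisForm n`. -/
def heisHomeomorph (n : ℕ) : Heis n ≃ₜ V1 n × ℝ :=
  (Homeomorph.prodAssoc _ _ _).symm.trans
    ((WithLp.homeomorphProd 2 (E n) (E n)).symm.prodCongr (Homeomorph.refl ℝ))

lemma horizontalDefect_heisHomeomorph_eq_zero_iff {η η' : Heis n} :
    horizontalDefect (heisForm n) (heisHomeomorph n η) (heisHomeomorph n η') = 0 ↔
      η' ∈ Hplane η := by
  change η.2.2 - η'.2.2 + 2 * (⟪η.2.1, η'.1⟫ - ⟪η.1, η'.2.1⟫) = 0 ↔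
    η'.2.2 = η.2.2 + 2 * (⟪η.2.1, η'.1⟫ - ⟪η.1, η'.2.1⟫)
  constructor <;> intro h <;> linarith

lemma IsHMonotone.isHorizontallyMonotone {T : Heis n → Set (V1 n)} (hT : IsHMonotone T) :
    IsHorizontallyMonotone (heisForm n) (T ∘ (heisHomeomorph n).symm) := by
  intro p q hpq v hv v' hv'
  obtain ⟨η, rfl⟩ := (heisHomeomorph n).surjective p
  obtain ⟨η', rfl⟩ := (heisHomeomorph n).surjective q
  rw [Function.comp_apply, Homeomorph.symm_apply_apply] at hv hv'
  exact hT η η' (horizontalDefect_heisHomeomorph_eq_zero_iff.mp hpq) v hv v' hv'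

theorem IsHMonotone.exists_eventually_norm_le {T : Heis n → Set (V1 n)} (hT : IsHMonotone T)
    {η₀ : Heis n} (hdom : ∀ᶠ η in 𝓝 η₀, (T η).Nonempty) :
    ∃ C : ℝ, ∀ᶠ η in 𝓝 η₀, ∀ v ∈ T η, ‖v‖ ≤ C := by
  have hmap := (heisHomeomorph n).map_nhds_eq η₀
  obtain ⟨C, hC⟩ := hT.isHorizontallyMonotone.exists_eventually_norm_le isAlt_heisForm
    separatingLeft_heisForm (p₀ := heisHomeomorph n η₀)
    (by rw [← hmap, eventually_map]; simpa using hdom)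
  rw [← hmap, eventually_map] at hC
  exact ⟨C, by simpa using hC⟩

lemma hmul_hinv_cancel_left (η η' : Heis n) : hmul η (hmul (hinv η) η') = η' := by
  ext1
  · simp [hmul, hinv]
  ext1
  · simp [hmul, hinv]
  · simp only [hmul, hinv, inner_add_left, inner_add_right, inner_neg_left, inner_neg_right]
    ring

lemma continuous_hmul_left (η : Heis n) : Continuous (hmul η) := by
  unfold hmul
  fun_prop

lemma gaugeN_nonneg (η : Heis n) : 0 ≤ gaugeN η :=
  Real.rpow_nonneg (by positivity) _

lemma gaugeN_pow_four (η : Heis n) :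
    gaugeN η ^ 4 = (‖η.1‖ ^ 2 + ‖η.2.1‖ ^ 2) ^ 2 + η.2.2 ^ 2 := by
  rw [gaugeN, ← Real.rpow_natCast, ← Real.rpow_mul (by positivity)]
  norm_num

lemma norm_le_gaugeN_of_gaugeN_le_one {η : Heis n} (hη : gaugeN η ≤ 1) : ‖η‖ ≤ gaugeN η := by
  have hN := gaugeN_nonneg η
  have hpow := gaugeN_pow_four η
  have hfst : ‖η.1‖ ≤ gaugeN η := by
    refine le_of_pow_le_pow_left₀ four_ne_zero hN ?_
    nlinarith [sq_nonneg (‖η.1‖ * ‖η.2.1‖), sq_nonneg (‖η.2.1‖ ^ 2), sq_nonneg η.2.2]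
  have hsnd : ‖η.2.1‖ ≤ gaugeN η := by
    refine le_of_pow_le_pow_left₀ four_ne_zero hN ?_
    nlinarith [sq_nonneg (‖η.1‖ * ‖η.2.1‖), sq_nonneg (‖η.1‖ ^ 2), sq_nonneg η.2.2]
  have hheight : |η.2.2| ≤ gaugeN η := by
    refine (abs_le_of_sq_le_sq (a := η.2.2) (b := gaugeN η ^ 2) ?_ (by positivity)).trans
      (pow_le_of_le_one hN hη two_ne_zero)
    nlinarith [sq_nonneg (‖η.1‖ ^ 2 + ‖η.2.1‖ ^ 2)]
  exact norm_prod_le_iff.mpr ⟨hfst, norm_prod_le_iff.mpr ⟨hsnd, hheight⟩⟩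

lemma exists_forall_dH_le_of_eventually_nhds {η₀ : Heis n} {P : Heis n → Prop}
    (hP : ∀ᶠ η in 𝓝 η₀, P η) : ∃ r > (0 : ℝ), ∀ η, dH η η₀ ≤ r → P η := by
  have hzero : hmul η₀ 0 = η₀ := by simp [hmul]
  have htranslate : ∀ᶠ κ in 𝓝 0, P (hmul η₀ κ) :=
    (continuous_hmul_left η₀).continuousAt.eventually (by rwa [hzero])
  obtain ⟨δ, hδ, hball⟩ := Metric.eventually_nhds_iff.mp htranslate
  refine ⟨min (δ / 2) 1, by positivity, fun η hη ↦ ?_⟩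
  obtain ⟨hηδ, hη1⟩ := le_min_iff.mp hη
  rw [← hmul_hinv_cancel_left η₀ η]
  refine hball ?_
  rw [dist_zero_right]
  linarith [norm_le_gaugeN_of_gaugeN_le_one hη1, show gaugeN (hmul (hinv η₀) η) ≤ δ / 2 from hηδ]

end Heis

theorem maximal_HMonotone_locally_bounded_general {n : ℕ} (T : Heis n → Set (V1 n))
    (hT : IsHMonotone T) {η₀ : Heis n} (hdom : ∀ᶠ η in 𝓝 η₀, (T η).Nonempty) :
    ∃ r > (0 : ℝ), ∃ M > (0 : ℝ), ∀ η : Heis n, dH η η₀ ≤ r → ∀ v ∈ T η, ‖v‖ ≤ M := by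
  obtain ⟨C, hC⟩ := hT.exists_eventually_norm_le hdom
  obtain ⟨r, hr, hbound⟩ := exists_forall_dH_le_of_eventually_nhds hC
  exact ⟨r, hr, max C 1, by positivity, fun η hη v hv ↦ (hbound η hη v hv).trans (le_max_left C 1)⟩

/-- Theorem 1.1: a maximal H-monotone map with full domain is locally bounded. -/
theorem maximal_HMonotone_locally_bounded {n : ℕ} (hn : 1 ≤ n)
    (T : Heis n → Set (V1 n)) (hT : IsMaximalHMonotone T)
    (hdom : ∀ η, (T η).Nonempty) :
    ∀ η₀ : Heis n, ∃ r > (0 : ℝ), ∃ M > (0 : ℝ),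
      ∀ η : Heis n, dH η η₀ ≤ r → ∀ v ∈ T η, ‖v‖ ≤ M := by
  intro η₀
  exact maximal_HMonotone_locally_bounded_general T hT.1 (.of_forall hdom)
end
end

section
/- Let T : ℍⁿ ⇉ V₁ be an H-monotone set-valued map with dom(T) = ℍⁿ. Assume that for every η ∈ ℍⁿ and every λ > 0 the map (ξ₁ + λT) restricted to H_η is surjective onto V₁, i.e. for every p ∈ ℝ²ⁿ there exist ζ ∈ H_η and v ∈ T(ζ) with p = ξ₁(ζ) + λ v. Then T is maximal H-monotone. -/
open scoped RealInnerProductSpace Pointwise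

noncomputable section

/- Minty's resolvent argument, one horizontal plane at a time: if `(η, v)` is monotonically related
to the graph of `T` over `H_η`, write `ξ₁ η + λ v = ξ₁ ζ + λ w` with `ζ ∈ H_η` and `w ∈ T ζ`.
Comparing `v` with `w` forces `ξ₁ ζ = ξ₁ η` and `w = v`, and `ξ₁` is injective on `H_η`, so
`ζ = η`. -/

theorem eq_and_eq_of_add_smul_eq_of_inner_nonneg {F : Type*} [NormedAddCommGroup F]
    [InnerProductSpace ℝ F] {x z v w : F} {c : ℝ} (hc : 0 < c)
    (hadd : x + c • v = z + c • w) (hmono : 0 ≤ ⟪v - w, x - z⟫) : x = z ∧ v = w := by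
  have hdiff : x - z = -(c • (v - w)) := by
    rw [smul_sub, neg_sub, sub_eq_sub_iff_add_eq_add, hadd, add_comm]
  have hinner : ⟪v - w, x - z⟫ = -(c * ‖v - w‖ ^ 2) := by
    rw [hdiff, inner_neg_right, real_inner_smul_right, real_inner_self_eq_norm_sq]
  have hsq : ‖v - w‖ ^ 2 = 0 := by nlinarith [sq_nonneg ‖v - w‖]
  have hvw : v = w := by rwa [sq_eq_zero_iff, norm_sub_eq_zero_iff] at hsq
  subst hvw
  exact ⟨add_right_cancel hadd, rfl⟩

section HorizontalPlane

variable {n : ℕ} (η : Heis n)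

theorem mem_Hplane_self : η ∈ Hplane η := by
  simp only [Hplane, Set.mem_ofPred_eq, real_inner_comm η.1, sub_self, mul_zero, add_zero]

theorem xi1_injOn_Hplane : Set.InjOn xi1 (Hplane η) := by
  rintro ⟨x, y, t⟩ ht ⟨x', y', t'⟩ ht' hxi
  obtain ⟨rfl, rfl⟩ : x = x' ∧ y = y' :=
    Prod.mk.inj ((WithLp.equiv 2 (E n × E n)).symm.injective hxi)
  obtain rfl : t = t' := ht.trans ht'.symm
  rfl

end HorizontalPlane

theorem surjective_imp_maximal_HMonotone_general {n : ℕ}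
    (T : Heis n → Set (V1 n)) (hT : IsHMonotone T)
    (hsurj : ∀ η : Heis n, ∃ lam : ℝ, 0 < lam ∧ ∀ p : V1 n,
      ∃ ζ ∈ Hplane η, ∃ v ∈ T ζ, p = xi1 ζ + lam • v) :
    IsMaximalHMonotone T := by
  refine ⟨hT, fun η v hmono => ?_⟩
  obtain ⟨lam, hlam, hsurj_lam⟩ := hsurj η
  obtain ⟨ζ, hζ, w, hw, hp⟩ := hsurj_lam (xi1 η + lam • v)
  obtain ⟨hxi, rfl⟩ :=
    eq_and_eq_of_add_smul_eq_of_inner_nonneg hlam hp (hmono ζ hζ w hw)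
  obtain rfl : η = ζ := xi1_injOn_Hplane η (mem_Hplane_self η) hζ hxi
  exact hw

/-- Minty's theorem, direction ii ⇒ i: if T is H-monotone with full domain and
ξ₁ + λT restricted to every horizontal plane is surjective onto V₁ (for every λ > 0),
then T is maximal H-monotone. -/
theorem surjective_imp_maximal_HMonotone {n : ℕ} (hn : 1 ≤ n)
    (T : Heis n → Set (V1 n)) (hT : IsHMonotone T)
    (hdom : ∀ η, (T η).Nonempty)
    (hsurj : ∀ η : Heis n, ∀ lam : ℝ, 0 < lam → ∀ p : V1 n,
      ∃ ζ ∈ Hplane η, ∃ v ∈ T ζ, p = xi1 ζ + lam • v) :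
    IsMaximalHMonotone T := by
  exact surjective_imp_maximal_HMonotone_general T hT fun η => ⟨1, one_pos, hsurj η 1 one_pos⟩
end
end

section
/- Let T : ℍⁿ ⇉ V₁ be a maximal H-monotone set-valued map with dom(T) = ℍⁿ. Then T is compact-valued: for every η ∈ ℍⁿ, the set T(η) ⊆ ℝ²ⁿ is nonempty and compact. -/
/-!
By maximality `T η` is an intersection of closed half-spaces. To bound it, move from `η` a little
in a horizontal direction `u`: the point reached lies in `Hplane η`, and monotonicity against any
`w` in the value there gives `⟪v, u⟫ ≤ ⟪w, u⟫` for all `v ∈ T η`. So `T η` is bounded in every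
direction, hence bounded by the uniform boundedness principle.
-/

open scoped RealInnerProductSpace Pointwise

noncomputable section

/-- The exponential of the horizontal vector `u`, which lets one move within a horizontal plane: the
points of `Hplane η` are the products `hmul η (horizontal u)`. -/
def horizontal {n : ℕ} (u : V1 n) : Heis n := (u.fst, u.snd, 0)

theorem isBounded_of_forall_bddAbove_inner {V : Type*} [NormedAddCommGroup V]
    [InnerProductSpace ℝ V] [CompleteSpace V] {s : Set V}
    (hs : ∀ u : V, BddAbove ((fun v ↦ ⟪v, u⟫) '' s)) : Bornology.IsBounded s := by
  have pointwise_bound (u : V) : ∃ C, ∀ v : s, ‖innerSL ℝ (v : V) u‖ ≤ C := by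
    obtain ⟨c, hc⟩ := hs u
    obtain ⟨c', hc'⟩ := hs (-u)
    refine ⟨max c c', fun v ↦ abs_le'.2 ⟨?_, ?_⟩⟩
    · exact (hc (Set.mem_image_of_mem _ v.2)).trans (le_max_left _ _)
    · rw [innerSL_apply_apply, ← inner_neg_right]
      exact (hc' (Set.mem_image_of_mem _ v.2)).trans (le_max_right _ _)
  obtain ⟨C, hC⟩ := banach_steinhaus pointwise_bound
  exact isBounded_iff_forall_norm_le.2
    ⟨C, fun v hv ↦ (innerSL_apply_norm ℝ v).symm.trans_le (hC ⟨v, hv⟩)⟩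

section Heisenberg

variable {n : ℕ}

theorem hmul_horizontal_mem_Hplane (η : Heis n) (u : V1 n) :
    hmul η (horizontal u) ∈ Hplane η := by
  simp only [hmul, horizontal, Hplane, Set.mem_ofPred_eq, inner_add_right,
    real_inner_comm η.1 η.2.1, real_inner_comm u.fst η.2.1]
  ring

theorem xi1_hmul_horizontal (η : Heis n) (u : V1 n) : xi1 (hmul η (horizontal u)) = xi1 η + u :=
  rfl

theorem hmul_horizontal_zero (η : Heis n) : hmul η (horizontal 0) = η := by
  simp [hmul, horizontal]

variable {T : Heis n → Set (V1 n)} {η : Heis n}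

theorem IsHMonotone.inner_le_inner_of_mem_hmul_horizontal (hT : IsHMonotone T) {u v w : V1 n}
    {r : ℝ} (hr : 0 < r) (hv : v ∈ T η) (hw : w ∈ T (hmul η (horizontal (r • u)))) :
    ⟪v, u⟫ ≤ ⟪w, u⟫ := by
  have hmono := hT _ _ (hmul_horizontal_mem_Hplane η (r • u)) v hv w hw
  rw [xi1_hmul_horizontal, sub_add_cancel_left, inner_neg_right, real_inner_smul_right,
    inner_sub_left, ← mul_neg, neg_sub] at hmono
  exact sub_nonneg.1 (nonneg_of_mul_nonneg_right hmono hr)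

theorem IsHMonotone.isBounded_apply (hT : IsHMonotone T)
    (hη : ∀ u : V1 n, ∃ r > (0 : ℝ), (T (hmul η (horizontal (r • u)))).Nonempty) :
    Bornology.IsBounded (T η) := by
  refine isBounded_of_forall_bddAbove_inner fun u ↦ ?_
  obtain ⟨r, hr, w, hw⟩ := hη u
  exact ⟨⟪w, u⟫, Set.forall_mem_image.2 fun _ hv ↦
    hT.inner_le_inner_of_mem_hmul_horizontal hr hv hw⟩

theorem IsMaximalHMonotone.apply_eq_iInter (hT : IsMaximalHMonotone T) (η : Heis n) :
    T η = ⋂ η' ∈ Hplane η, ⋂ v' ∈ T η', {v | 0 ≤ ⟪v - v', xi1 η - xi1 η'⟫} := by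
  ext v
  simp only [Set.mem_iInter, Set.mem_ofPred_eq]
  exact ⟨fun hv η' hη' v' hv' ↦ hT.1 η η' hη' v hv v' hv', hT.2 η v⟩

theorem IsMaximalHMonotone.isClosed_apply (hT : IsMaximalHMonotone T) (η : Heis n) :
    IsClosed (T η) := by
  rw [hT.apply_eq_iInter η]
  exact isClosed_biInter fun η' _ ↦ isClosed_biInter fun v' _ ↦
    isClosed_le continuous_const (by fun_prop)

end Heisenberg

-- `hη` holds whenever `η` is interior to the domain of `T` relative to the plane `Hplane η`.
theorem maximal_HMonotone_compact_values_general {n : ℕ} {T : Heis n → Set (V1 n)}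
    (hT : IsMaximalHMonotone T) {η : Heis n}
    (hη : ∀ u : V1 n, ∃ r > (0 : ℝ), (T (hmul η (horizontal (r • u)))).Nonempty) :
    (T η).Nonempty ∧ IsCompact (T η) := by
  refine ⟨?_, Metric.isCompact_of_isClosed_isBounded (hT.isClosed_apply η)
    (hT.1.isBounded_apply hη)⟩
  obtain ⟨r, -, hr⟩ := hη 0
  rwa [smul_zero, hmul_horizontal_zero] at hr

/-- Proposition 2.4.ii: a maximal H-monotone map with full domain is compact-valued. -/
theorem maximal_HMonotone_compact_values {n : ℕ} (hn : 1 ≤ n)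
    (T : Heis n → Set (V1 n)) (hT : IsMaximalHMonotone T)
    (hdom : ∀ η, (T η).Nonempty) :
    ∀ η : Heis n, (T η).Nonempty ∧ IsCompact (T η) :=
  fun _ ↦ maximal_HMonotone_compact_values_general hT fun _ ↦ ⟨1, one_pos, hdom _⟩
end
end
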